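/- Let C be a finite semigroup and φ : A⁺ → C a semigroup morphism (i.e., φ(uv) = φ(u)φ(v) for all nonempty words u, v). Then for every infinite word x over A there exists a suffix x' of x which admits a φ-ultra monochromatic factorization. -/

import Mathlib

/-- The first `n` letters of the infinite word `x`, as a finite word. -/
def wordTake {A : Type*} (x : ℕ → A) (n : ℕ) : List A := (List.range n).map x

/-- The finite word `u` is a prefix of the infinite word `x`. -/
def IsPrefixOf {A : Type*} (u : List A) (x : ℕ → A) : Prop := u = wordTake x u.length

/-- The finite word `u` is a (nonempty) factor of the infinite word `x`. -/
def IsFactorOf {A : Type*} (u : List A) (x : ℕ → A) : Prop :=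
  u ≠ [] ∧ ∃ i : ℕ, u = (List.range u.length).map fun k => x (i + k)

/-- `V 0, V 1, V 2, …` is a factorization of the infinite word `x` into nonempty blocks,
i.e. each finite concatenation `V 0 ++ ⋯ ++ V (n-1)` is a prefix of `x`. -/
def IsFactorization {A : Type*} (x : ℕ → A) (V : ℕ → List A) : Prop :=
  (∀ i, V i ≠ []) ∧ ∀ n : ℕ, IsPrefixOf (((List.range n).map V).flatten) x

/-- The concatenation `V i ++ V (i+1) ++ ⋯ ++ V (i+j)` of consecutive blocks. -/
def blockConcat {A : Type*} (V : ℕ → List A) (i j : ℕ) : List A :=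
  ((List.range (j + 1)).map fun t => V (i + t)).flatten

/-- The concatenation `V (n (σ 0)) ++ V (n (σ 1)) ++ ⋯ ++ V (n (σ (k-1)))`. -/
def permConcat {A : Type*} (V : ℕ → List A) {k : ℕ} (n : Fin k → ℕ)
    (σ : Equiv.Perm (Fin k)) : List A :=
  (List.ofFn fun t => V (n (σ t))).flatten

/-- The factorization `V` is `φ`-monochromatic. -/
def IsMonochromatic {A C : Type*} (φ : List A → C) (V : ℕ → List A) : Prop :=
  ∃ c : C, ∀ i, φ (V i) = c

/-- The factorization `V` is `φ`-sequentially monochromatic. -/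
def IsSeqMonochromatic {A C : Type*} (φ : List A → C) (V : ℕ → List A) : Prop :=
  ∃ c : C, ∀ i j : ℕ, φ (blockConcat V i j) = c

/-- The factorization `V` is `φ`-ultra monochromatic. -/
def IsUltraMonochromatic {A C : Type*} (φ : List A → C) (V : ℕ → List A) : Prop :=
  ∃ c : C, ∀ k : ℕ, 1 ≤ k → ∀ n : Fin k → ℕ, StrictMono n →
    ∀ σ : Equiv.Perm (Fin k), φ (permConcat V n σ) = c

/-- The factor of `x` from position `a` (included) to `b` (excluded). -/
def facWord {A : Type*} (x : ℕ → A) (a b : ℕ) : List A :=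
  (List.range (b - a)).map fun k => x (a + k)

theorem facWord_append {A : Type*} (x : ℕ → A) {a b c : ℕ} (h : a ≤ b) (h' : b ≤ c) :
    facWord x a b ++ facWord x b c = facWord x a c := by
  obtain ⟨p, rfl⟩ := Nat.exists_eq_add_of_le h
  obtain ⟨q, rfl⟩ := Nat.exists_eq_add_of_le h'
  have e1 : a + p - a = p := by omega
  have e2 : a + p + q - (a + p) = q := by omega
  have e3 : a + p + q - a = p + q := by omega
  simp only [facWord, e1, e2, e3, List.range_add, List.map_append, List.map_map]
  congr 1
  apply List.map_congr_left
  intro k _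
  simp [Nat.add_assoc]

theorem facWord_ne_nil {A : Type*} (x : ℕ → A) {a b : ℕ} (h : a < b) : facWord x a b ≠ [] := by
  simp [facWord]
  omega

theorem flatten_facWord {A : Type*} (x : ℕ → A) (s : ℕ → ℕ) (hs : StrictMono s) (n : ℕ) :
    ((List.range n).map fun i => facWord x (s i) (s (i + 1))).flatten
      = facWord x (s 0) (s n) := by
  induction n with
  | zero => simp [facWord]
  | succ n ih =>
    rw [List.range_succ, List.map_append, List.flatten_append, ih]
    simp only [List.map_cons, List.map_nil, List.flatten_cons, List.flatten_nil, List.append_nil]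
    exact facWord_append x (hs.monotone (Nat.zero_le n)) (hs.monotone (Nat.le_succ n))

theorem phi_flatten {A C : Type*} [Semigroup C] (φ : List A → C)
    (hφ : ∀ u v : List A, u ≠ [] → v ≠ [] → φ (u ++ v) = φ u * φ v) (c : C) (hc : c * c = c)
    (L : List (List A)) (hL : L ≠ []) (h : ∀ u ∈ L, u ≠ [] ∧ φ u = c) :
    L.flatten ≠ [] ∧ φ L.flatten = c := by
  induction L with
  | nil => exact absurd rfl hL
  | cons u L ih =>
    have hu := h u (by simp)
    by_cases hn : L = []
    · subst hn
      simpa using hu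
    · have hi := ih hn (fun v hv => h v (by simp [hv]))
      rw [List.flatten_cons]
      refine ⟨by simp [hu.1], ?_⟩
      rw [hφ _ _ hu.1 hi.1, hu.2, hi.2, hc]

theorem ultra_color {C : Type*} [Finite C] (U : Ultrafilter ℕ) (g : ℕ → C) :
    ∃ c, ∀ᶠ j in (U : Filter ℕ), g j = c := by
  obtain ⟨c, hc⟩ := (U.map g).eq_pure_of_finite
  refine ⟨c, ?_⟩
  have : ({c} : Set C) ∈ U.map g := by rw [hc]; exact Filter.mem_pure.2 rfl
  exact this

/-- Infinite Ramsey theorem for pairs. -/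
theorem ramsey_pairs {C : Type*} [Finite C] (f : ℕ → ℕ → C) :
    ∃ c, ∃ s : ℕ → ℕ, StrictMono s ∧ ∀ i j, i < j → f (s i) (s j) = c := by
  let U : Ultrafilter ℕ := Filter.hyperfilter ℕ
  choose g hg using fun i => ultra_color U (f i)
  obtain ⟨c, hc⟩ := ultra_color U g
  obtain ⟨s, -, hs⟩ := exists_seq_of_forall_finset_exists (fun i => g i = c)
    (fun i j => i < j ∧ f i j = c) (by
      intro S hS
      have h2 : ∀ᶠ j in (U : Filter ℕ), ∀ i ∈ S, i < j ∧ f i j = c := by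
        rw [Filter.eventually_all_finset]
        intro i hi
        have h3 : ∀ᶠ j in (U : Filter ℕ), i < j := by
          have h4 : ∀ᶠ j in (Filter.atTop : Filter ℕ), i < j := Filter.eventually_gt_atTop i
          exact Nat.hyperfilter_le_atTop h4
        filter_upwards [h3, hg i] with j h5 h6
        exact ⟨h5, h6.trans (hS i hi)⟩
      exact (hc.and h2).exists)
  exact ⟨c, s, fun i j h => (hs i j h).1, fun i j h => (hs i j h).2⟩

/-- If `C` is a finite semigroup and `φ : A⁺ → C` is a semigroup morphism,
then every infinite word over `A` has a suffix admitting a `φ`-ultra monochromatic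
factorization. -/
theorem suffix_admits_ultra_monochromatic_of_morphism
    {A C : Type*} [Nonempty A] [Semigroup C] [Fintype C] [Nonempty C]
    (φ : List A → C)
    (hφ : ∀ u v : List A, u ≠ [] → v ≠ [] → φ (u ++ v) = φ u * φ v)
    (x : ℕ → A) :
    ∃ n : ℕ, ∃ V : ℕ → List A,
      IsFactorization (fun m => x (n + m)) V ∧ IsUltraMonochromatic φ V := by
  obtain ⟨c, s, hs, hc⟩ := ramsey_pairs (fun i j => φ (facWord x i j))
  have hne : ∀ i, facWord x (s i) (s (i + 1)) ≠ [] :=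
    fun i => facWord_ne_nil x (hs (Nat.lt_succ_self i))
  have hcc : c * c = c := by
    have h := hφ _ _ (hne 0) (hne 1)
    rw [facWord_append x (hs.monotone (by omega)) (hs.monotone (by omega))] at h
    have h01 := hc 0 1 (by omega)
    have h12 := hc 1 2 (by omega)
    have h02 := hc 0 2 (by omega)
    simp only [Nat.zero_add, Nat.reduceAdd] at h h01 h12 h02
    rw [h01, h12, h02] at h
    exact h.symm
  refine ⟨s 0, fun i => facWord x (s i) (s (i + 1)), ⟨hne, ?_⟩, c, ?_⟩
  · intro n
    rw [flatten_facWord x s hs n]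
    simp [IsPrefixOf, wordTake, facWord]
  · intro k hk n _ σ
    refine (phi_flatten φ hφ c hcc _ ?_ ?_).2
    · intro h
      have := congrArg List.length h
      simp at this
      omega
    · intro u hu
      rw [List.mem_ofFn] at hu
      obtain ⟨t, rfl⟩ := hu
      exact ⟨hne _, hc _ _ (Nat.lt_succ_self _)⟩
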